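/- arXiv:2507.15616 — 4 statements merged into one kernel-verified Lean document; each statement's English description precedes it below -/
import Mathlib

section
/- For every β ∈ ℂ, the second moment of the mixed p-spin partition function over the Gaussian disorder satisfies the exact identity E_G[|Z_G(β)|²] = exp(n·ξ(1)·Re(β²)) · Z_CW(|β|²). -/
/-! Writing `H_G(σ) = Σ_k a_σ(k) G_k`, we have
`|Z_G(β)|² = 4^{-n} Σ_{σ,τ} exp(Σ_k (β a_σ(k) + conj β a_τ(k)) G_k)`, and the Gaussian integral of
each term is the exponential of `½ Σ_k (β a_σ(k) + conj β a_τ(k))²` (`integral_exp_linear`).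
The covariance `Σ_k a_σ(k) a_τ(k)` equals `n ξ(⟨σ,τ⟩/n)` (`sum_coeff_mul`), so the diagonal parts
of this square contribute `n ξ(1) Re(β²)` and the cross part `|β|² n ξ(⟨σ,τ⟩/n)`. For fixed `σ`,
the coordinatewise product of signs `τ ↦ στ` permutes the hypercube, hence the sum over `τ` does not
depend on `σ` and is `2^n Z_CW(|β|²)`; summing over `σ` cancels the remaining `2^{-n}`. -/


open MeasureTheory ProbabilityTheory

/-- The value `±1` of a Boolean spin. -/
noncomputable def spin (b : Bool) : ℝ := if b then 1 else -1

/-- The magnetization `⟨σ, 1⟩ = Σ_i σ_i` of a spin configuration. -/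
noncomputable def mag {n : ℕ} (σ : Fin n → Bool) : ℝ := ∑ i, spin (σ i)

/-- Index set for the Gaussian disorder: pairs `(p, (i_1, …, i_p))` with `p ≤ p_max`
and each `i_j ∈ {1, …, n}`. -/
abbrev SpinIdx (pmax n : ℕ) := Σ p : Fin (pmax + 1), (Fin (p : ℕ) → Fin n)

/-- The disorder distribution: i.i.d. standard Gaussians over all index tuples. -/
noncomputable def disorder (pmax n : ℕ) : Measure ((SpinIdx pmax n) → ℝ) :=
  Measure.pi fun _ => gaussianReal 0 1

/-- The mixed `p`-spin Hamiltonian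
`H_G(σ) = Σ_{p=2}^{p_max} γ_p n^{-(p-1)/2} Σ_{i_1,…,i_p} G_{i_1,…,i_p} σ_{i_1}⋯σ_{i_p}`. -/
noncomputable def hamiltonian (pmax n : ℕ) (γ : ℕ → ℝ) (G : SpinIdx pmax n → ℝ)
    (σ : Fin n → Bool) : ℝ :=
  ∑ p : Fin (pmax + 1), if 2 ≤ (p : ℕ) then
      γ (p : ℕ) * (n : ℝ) ^ (-((((p : ℕ) : ℝ) - 1) / 2)) *
        ∑ α : Fin (p : ℕ) → Fin n, G ⟨p, α⟩ * ∏ j, spin (σ (α j))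
    else 0

/-- The mixture function `ξ(s) = Σ_{p=2}^{p_max} γ_p² s^p`. -/
noncomputable def mix (pmax : ℕ) (γ : ℕ → ℝ) (s : ℝ) : ℝ :=
  ∑ p ∈ Finset.Icc 2 pmax, γ p ^ 2 * s ^ p

/-- The (complex) partition function `Z_G(β) = 2^{-n} Σ_σ exp(β H_G(σ))`. -/
noncomputable def Zpart (pmax n : ℕ) (γ : ℕ → ℝ) (G : SpinIdx pmax n → ℝ) (β : ℂ) : ℂ :=
  (2 : ℂ) ^ (-(n : ℤ)) * ∑ σ : Fin n → Bool,
    Complex.exp (β * (hamiltonian pmax n γ G σ : ℂ))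

/-- The mixed `p`-spin Curie–Weiss partition function
`Z_CW(β) = 2^{-n} Σ_σ exp(β n ξ(⟨σ,1⟩/n))`. -/
noncomputable def Zcw (pmax n : ℕ) (γ : ℕ → ℝ) (β : ℝ) : ℝ :=
  (2 : ℝ) ^ (-(n : ℤ)) * ∑ σ : Fin n → Bool,
    Real.exp (β * n * mix pmax γ (mag σ / n))

/-- The coefficient of `G_k` in the Hamiltonian at `σ`. -/
noncomputable def coeff (pmax n : ℕ) (γ : ℕ → ℝ) (σ : Fin n → Bool) (k : SpinIdx pmax n) : ℝ :=
  if 2 ≤ (k.1 : ℕ) then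
    γ (k.1 : ℕ) * (n : ℝ) ^ (-((((k.1 : ℕ) : ℝ) - 1) / 2)) * ∏ j, spin (σ (k.2 j))
  else 0

lemma hamiltonian_eq (pmax n : ℕ) (γ : ℕ → ℝ) (G : SpinIdx pmax n → ℝ) (σ : Fin n → Bool) :
    hamiltonian pmax n γ G σ = ∑ k, coeff pmax n γ σ k * G k := by
  rw [hamiltonian, Fintype.sum_sigma]
  refine Finset.sum_congr rfl fun p _ => ?_
  by_cases h : 2 ≤ (p : ℕ)
  · simp only [coeff, h, if_true, Finset.mul_sum]
    exact Finset.sum_congr rfl fun α _ => by ring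
  · simp [coeff, h]

lemma spin_mul (a b : Bool) : spin a * spin b = spin (a == b) := by
  cases a <;> cases b <;> norm_num [spin]

/-- The coordinatewise product of two sign configurations. -/
def spinMul {n : ℕ} (σ τ : Fin n → Bool) : Fin n → Bool := fun i => σ i == τ i

lemma spinMul_involutive {n : ℕ} (σ : Fin n → Bool) : Function.Involutive (spinMul σ) := by
  intro τ
  funext i
  simp only [spinMul]
  cases σ i <;> cases τ i <;> rfl

lemma mag_spinMul_self {n : ℕ} (σ : Fin n → Bool) : mag (spinMul σ σ) = n := by
  simp [mag, spinMul, spin]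

/-- The covariance of `H_G(σ)` and `H_G(τ)` is `n ξ(⟨σ,τ⟩/n)`. -/
lemma sum_coeff_mul (pmax n : ℕ) (hn : 1 ≤ n) (γ : ℕ → ℝ) (σ τ : Fin n → Bool) :
    ∑ k, coeff pmax n γ σ k * coeff pmax n γ τ k =
      n * mix pmax γ (mag (spinMul σ τ) / n) := by
  have hn0 : (0 : ℝ) < n := by exact_mod_cast hn
  have key : ∀ p : Fin (pmax + 1),
      ∑ α : Fin (p : ℕ) → Fin n, coeff pmax n γ σ ⟨p, α⟩ * coeff pmax n γ τ ⟨p, α⟩ =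
        if 2 ≤ (p : ℕ) then n * (γ p ^ 2 * (mag (spinMul σ τ) / n) ^ (p : ℕ)) else 0 := by
    intro p
    by_cases h : 2 ≤ (p : ℕ)
    · simp only [coeff, h, if_true]
      have hpow : (n : ℝ) ^ (-((((p : ℕ) : ℝ) - 1) / 2)) * (n : ℝ) ^ (-((((p : ℕ) : ℝ) - 1) / 2))
          = n / (n : ℝ) ^ (p : ℕ) := by
        rw [← Real.rpow_add hn0, ← Real.rpow_natCast, ← Real.rpow_one_sub' hn0.le]
        · congr 1
          ring
        · have : (2 : ℝ) ≤ (p : ℕ) := by exact_mod_cast h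
          linarith
      have hmag : mag (spinMul σ τ) ^ (p : ℕ) =
          ∑ α : Fin (p : ℕ) → Fin n, (∏ j, spin (σ (α j))) * ∏ j, spin (τ (α j)) := by
        rw [mag, Fintype.sum_pow]
        refine Finset.sum_congr rfl fun α _ => ?_
        rw [← Finset.prod_mul_distrib]
        exact Finset.prod_congr rfl fun j _ => (spin_mul _ _).symm
      calc _ = ∑ α : Fin (p : ℕ) → Fin n, γ p ^ 2 * (n / (n : ℝ) ^ (p : ℕ)) *
            ((∏ j, spin (σ (α j))) * ∏ j, spin (τ (α j))) := by
            refine Finset.sum_congr rfl fun α _ => ?_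
            rw [← hpow]
            ring
        _ = _ := by
            rw [← Finset.mul_sum, ← hmag, div_pow]
            ring
    · simp [coeff, h]
  rw [Fintype.sum_sigma, Finset.sum_congr rfl fun p _ => key p,
    Fin.sum_univ_eq_sum_range
      (fun p => if 2 ≤ p then (n : ℝ) * (γ p ^ 2 * (mag (spinMul σ τ) / n) ^ p) else 0) (pmax + 1),
    ← Finset.sum_filter, mix, Finset.mul_sum]
  refine Finset.sum_congr ?_ fun _ _ => rfl
  ext p
  simp only [Finset.mem_filter, Finset.mem_range, Finset.mem_Icc]
  omega

lemma integrable_exp_gaussian (z : ℂ) :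
    Integrable (fun x : ℝ => Complex.exp (z * x)) (gaussianReal 0 1) := by
  refine ProbabilityTheory.integrable_cexp_mul_of_re_mem_integrableExpSet (X := id)
    aemeasurable_id ?_
  simp [integrableExpSet_id_gaussianReal]

lemma exp_linear_eq_prod {ι : Type*} [Fintype ι] (c : ι → ℂ) (G : ι → ℝ) :
    Complex.exp (∑ k, c k * (G k : ℂ)) = ∏ k, Complex.exp (c k * (G k : ℂ)) :=
  Complex.exp_sum _ _

lemma integrable_exp_linear {ι : Type*} [Fintype ι] (c : ι → ℂ) :
    Integrable (fun G : ι → ℝ => Complex.exp (∑ k, c k * (G k : ℂ)))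
      (Measure.pi fun _ => gaussianReal 0 1) := by
  simp_rw [exp_linear_eq_prod]
  exact Integrable.fintype_prod (f := fun k (x : ℝ) => Complex.exp (c k * (x : ℂ)))
    fun k => integrable_exp_gaussian (c k)

lemma integral_exp_linear {ι : Type*} [Fintype ι] (c : ι → ℂ) :
    ∫ G : ι → ℝ, Complex.exp (∑ k, c k * (G k : ℂ)) ∂(Measure.pi fun _ => gaussianReal 0 1) =
      Complex.exp (∑ k, c k ^ 2 / 2) := by
  simp_rw [exp_linear_eq_prod]
  rw [integral_fintype_prod_eq_prod (fun k (x : ℝ) => Complex.exp (c k * (x : ℂ))),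
    Complex.exp_sum]
  refine Finset.prod_congr rfl fun k _ => ?_
  have h := complexMGF_id_gaussianReal (μ := 0) (v := 1) (c k)
  simpa [complexMGF] using h

/-- `|Z_G(β)|²` as a double sum of exponentials of linear forms in the disorder. -/
lemma normSq_Zpart (pmax n : ℕ) (γ : ℕ → ℝ) (G : SpinIdx pmax n → ℝ) (β : ℂ) :
    ((‖Zpart pmax n γ G β‖ ^ 2 : ℝ) : ℂ) =
      ((2 : ℂ) ^ (-(n : ℤ)) * (2 : ℂ) ^ (-(n : ℤ))) * ∑ σ : Fin n → Bool, ∑ τ : Fin n → Bool,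
        Complex.exp (∑ k, (β * coeff pmax n γ σ k + star β * coeff pmax n γ τ k) * (G k : ℂ)) := by
  have h2 : (starRingEnd ℂ) ((2 : ℂ) ^ (-(n : ℤ))) = (2 : ℂ) ^ (-(n : ℤ)) := by
    rw [map_zpow₀, map_ofNat]
  rw [Complex.ofReal_pow, ← Complex.mul_conj', Zpart, map_mul, map_sum, h2, mul_mul_mul_comm,
    Finset.sum_mul_sum]
  congr 1
  refine Finset.sum_congr rfl fun σ _ => Finset.sum_congr rfl fun τ _ => ?_
  rw [← Complex.exp_conj, ← Complex.exp_add, map_mul, Complex.conj_ofReal, hamiltonian_eq,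
    hamiltonian_eq]
  push_cast
  rw [Finset.mul_sum, Finset.mul_sum, ← Finset.sum_add_distrib]
  congr 1
  refine Finset.sum_congr rfl fun k _ => ?_
  simp only [← starRingEnd_apply]
  ring

/-- The Gaussian exponent of the pair `(σ, τ)`: the diagonal covariances combine to
`n ξ(1) Re(β²)`, the cross covariance carries `|β|²`. -/
lemma sum_sq_div_two (pmax n : ℕ) (hn : 1 ≤ n) (γ : ℕ → ℝ) (σ τ : Fin n → Bool) (β : ℂ) :
    ∑ k, (β * coeff pmax n γ σ k + star β * coeff pmax n γ τ k) ^ 2 / 2 =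
      (((n : ℝ) * mix pmax γ 1 * (β ^ 2).re +
        ‖β‖ ^ 2 * n * mix pmax γ (mag (spinMul σ τ) / n) : ℝ) : ℂ) := by
  have hn0 : (n : ℝ) ≠ 0 := by positivity
  have hdiag : ∀ ρ : Fin n → Bool,
      ∑ k, coeff pmax n γ ρ k * coeff pmax n γ ρ k = n * mix pmax γ 1 := by
    intro ρ
    rw [sum_coeff_mul pmax n hn, mag_spinMul_self, div_self hn0]
  have hsplit : ∑ k, (β * coeff pmax n γ σ k + star β * coeff pmax n γ τ k) ^ 2 / 2 =
      β ^ 2 / 2 * ((∑ k, coeff pmax n γ σ k * coeff pmax n γ σ k : ℝ) : ℂ) +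
      star β ^ 2 / 2 * ((∑ k, coeff pmax n γ τ k * coeff pmax n γ τ k : ℝ) : ℂ) +
      β * star β * ((∑ k, coeff pmax n γ σ k * coeff pmax n γ τ k : ℝ) : ℂ) := by
    push_cast
    simp only [Finset.mul_sum, ← Finset.sum_add_distrib]
    exact Finset.sum_congr rfl fun k _ => by ring
  have hre : ((β ^ 2).re : ℂ) = (β ^ 2 + star β ^ 2) / 2 := by
    rw [Complex.re_eq_add_conj, map_pow, starRingEnd_apply]
  have hnorm : β * star β = ((‖β‖ ^ 2 : ℝ) : ℂ) := by
    rw [← starRingEnd_apply, Complex.mul_conj', Complex.ofReal_pow]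
  rw [hsplit, hdiag, hdiag, sum_coeff_mul pmax n hn, hnorm, Complex.ofReal_add,
    Complex.ofReal_mul (_ * _) (β ^ 2).re, hre]
  push_cast
  ring

/-- For every `β ∈ ℂ`,
`E_G[|Z_G(β)|²] = exp(n ξ(1) Re(β²)) · Z_CW(|β|²)`. -/
theorem second_moment_identity (pmax n : ℕ) (hpmax : 2 ≤ pmax) (hn : 1 ≤ n)
    (γ : ℕ → ℝ) (hγ : ∀ p, 0 ≤ γ p) (β : ℂ) :
    ∫ G, ‖Zpart pmax n γ G β‖ ^ 2 ∂(disorder pmax n) =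
      Real.exp ((n : ℝ) * mix pmax γ 1 * (β ^ 2).re) * Zcw pmax n γ (‖β‖ ^ 2) := by
  apply Complex.ofReal_injective
  rw [← integral_complex_ofReal]
  simp_rw [normSq_Zpart]
  have hint : ∀ σ τ : Fin n → Bool, Integrable (fun G : SpinIdx pmax n → ℝ =>
      Complex.exp (∑ k, (β * coeff pmax n γ σ k + star β * coeff pmax n γ τ k) * (G k : ℂ)))
      (disorder pmax n) := fun σ τ => integrable_exp_linear _
  rw [integral_const_mul, integral_finsetSum _ fun σ _ => integrable_finsetSum _ fun τ _ => hint σ τ]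
  -- Reindexing by `τ ↦ στ` removes the dependence of the inner sum on `σ`.
  have hinner : ∀ σ : Fin n → Bool,
      ∫ G, ∑ τ : Fin n → Bool, Complex.exp
        (∑ k, (β * coeff pmax n γ σ k + star β * coeff pmax n γ τ k) * (G k : ℂ))
        ∂(disorder pmax n) =
      ((Real.exp ((n : ℝ) * mix pmax γ 1 * (β ^ 2).re) *
        ∑ τ : Fin n → Bool, Real.exp (‖β‖ ^ 2 * n * mix pmax γ (mag τ / n)) : ℝ) : ℂ) := by
    intro σ
    rw [integral_finsetSum _ fun τ _ => hint σ τ, ← (spinMul_involutive σ).bijective.sum_comp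
      (fun τ => Real.exp (‖β‖ ^ 2 * n * mix pmax γ (mag τ / n))), Finset.mul_sum,
      Complex.ofReal_sum]
    refine Finset.sum_congr rfl fun τ _ => ?_
    rw [disorder, integral_exp_linear, sum_sq_div_two pmax n hn, ← Real.exp_add,
      Complex.ofReal_exp]
  rw [Finset.sum_congr rfl fun σ _ => hinner σ, Finset.sum_const, Finset.card_univ, Zcw,
    Fintype.card_fun, Fintype.card_bool, Fintype.card_fin, nsmul_eq_mul]
  push_cast
  rw [zpow_neg, zpow_natCast]
  field_simp
end

section
/- For every n ≥ 1 and every real β with 0 ≤ β < 1, the Curie–Weiss partition function of the Sherrington–Kirkpatrick model satisfies 2^{-n} Σ_{σ∈{−1,1}^n} exp(β²·⟨σ,1⟩²/(2n)) ≤ (1−β²)^{-1/2}; equivalently, its logarithm is at most −(1/2)·log(1−β²). -/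
open MeasureTheory

lemma sum_exp_mul_mag (n : ℕ) (t : ℝ) :
    ∑ σ : Fin n → Bool, Real.exp (t * mag σ) = (2 * Real.cosh t) ^ n := by
  have h : 2 * Real.cosh t = ∑ b : Bool, Real.exp (t * spin b) := by
    simp [spin, Real.cosh_eq]
    ring
  rw [h, ← Fin.prod_const, Finset.prod_univ_sum, Fintype.piFinset_univ]
  refine Finset.sum_congr rfl fun σ _ => ?_
  rw [mag, Finset.mul_sum, Real.exp_sum]

lemma sum_exp_mul_mag_le (n : ℕ) (t : ℝ) :
    ∑ σ : Fin n → Bool, Real.exp (t * mag σ) ≤ 2 ^ n * Real.exp (n * t ^ 2 / 2) := by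
  rw [sum_exp_mul_mag, mul_pow]
  have h : Real.cosh t ^ n ≤ Real.exp (t ^ 2 / 2) ^ n :=
    pow_le_pow_left₀ (Real.cosh_pos t).le (Real.cosh_le_exp_half_sq t) n
  rw [← Real.exp_nat_mul, ← mul_div_assoc] at h
  gcongr

lemma exp_linear_sub_half_sq (a x : ℝ) :
    Real.exp (a * x - x ^ 2 / 2)
      = Real.exp (a ^ 2 / 2) * Real.exp (-(1 / 2) * (x - a) ^ 2) := by
  rw [← Real.exp_add]
  ring_nf

lemma integrable_exp_linear_sub_half_sq (a : ℝ) :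
    Integrable fun x : ℝ => Real.exp (a * x - x ^ 2 / 2) := by
  simp_rw [exp_linear_sub_half_sq]
  exact ((integrable_exp_neg_mul_sq (by norm_num : (0 : ℝ) < 1 / 2)).comp_sub_right a).const_mul _

lemma integral_exp_linear_sub_half_sq (a : ℝ) :
    ∫ x : ℝ, Real.exp (a * x - x ^ 2 / 2) = Real.exp (a ^ 2 / 2) * √(2 * Real.pi) := by
  simp_rw [exp_linear_sub_half_sq]
  rw [integral_const_mul, integral_sub_right_eq_self
    (fun x : ℝ => Real.exp (-(1 / 2) * x ^ 2)) a, integral_gaussian]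
  congr 2
  ring

lemma sum_exp_sq_mag_le (n : ℕ) (hn : 1 ≤ n) (β : ℝ) (hβ : 0 < 1 - β ^ 2) :
    ∑ σ : Fin n → Bool, Real.exp (β ^ 2 * (mag σ) ^ 2 / (2 * n))
      ≤ 2 ^ n * (1 / √(1 - β ^ 2)) := by
  have hn0 : (0 : ℝ) < n := by exact_mod_cast hn
  set s : ℝ := β / √n with hs
  have hs2 : s ^ 2 = β ^ 2 / n := by rw [hs, div_pow, Real.sq_sqrt hn0.le]
  have hpi : 0 < √(2 * Real.pi) := by positivity
  refine le_of_mul_le_mul_right ?_ hpi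
  calc (∑ σ : Fin n → Bool, Real.exp (β ^ 2 * (mag σ) ^ 2 / (2 * n))) * √(2 * Real.pi)
      = ∑ σ : Fin n → Bool, ∫ x : ℝ, Real.exp (s * mag σ * x - x ^ 2 / 2) := by
        rw [Finset.sum_mul]
        refine Finset.sum_congr rfl fun σ _ => ?_
        rw [integral_exp_linear_sub_half_sq, mul_pow, hs2]
        congr 2
        field_simp
    _ = ∫ x : ℝ, ∑ σ : Fin n → Bool, Real.exp (s * mag σ * x - x ^ 2 / 2) :=
        (integral_finsetSum _ fun σ _ => integrable_exp_linear_sub_half_sq _).symm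
    _ ≤ ∫ x : ℝ, 2 ^ n * Real.exp (-((1 - β ^ 2) / 2) * x ^ 2) := by
        refine integral_mono
          (integrable_finsetSum _ fun σ _ => integrable_exp_linear_sub_half_sq _)
          ((integrable_exp_neg_mul_sq (half_pos hβ)).const_mul _) fun x => ?_
        have h1 : ∀ σ : Fin n → Bool, Real.exp (s * mag σ * x - x ^ 2 / 2)
            = Real.exp (s * x * mag σ) * Real.exp (-(x ^ 2 / 2)) := fun σ => by
          rw [← Real.exp_add]
          ring_nf
        have h2 : Real.exp (-((1 - β ^ 2) / 2) * x ^ 2)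
            = Real.exp (n * (s * x) ^ 2 / 2) * Real.exp (-(x ^ 2 / 2)) := by
          rw [← Real.exp_add, mul_pow, hs2]
          congr 1
          field_simp
          ring
        simp only [h1, h2]
        rw [← Finset.sum_mul, ← mul_assoc]
        exact mul_le_mul_of_nonneg_right (sum_exp_mul_mag_le n (s * x)) (Real.exp_pos _).le
    _ = 2 ^ n * (1 / √(1 - β ^ 2)) * √(2 * Real.pi) := by
        rw [integral_const_mul, integral_gaussian,
          show Real.pi / ((1 - β ^ 2) / 2) = 2 * Real.pi / (1 - β ^ 2) by field_simp,
          Real.sqrt_div (by positivity)]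
        ring

/-- For every `n ≥ 1` and `0 ≤ β < 1`, the Curie–Weiss partition function
of the SK model satisfies `2^{-n} Σ_σ exp(β²⟨σ,1⟩²/(2n)) ≤ (1-β²)^{-1/2}`; equivalently its
logarithm is at most `-(1/2)·log(1-β²)`. -/
theorem curie_weiss_bound_SK (n : ℕ) (hn : 1 ≤ n) (β : ℝ) (hβ0 : 0 ≤ β) (hβ1 : β < 1) :
    (2 : ℝ) ^ (-(n : ℤ)) * (∑ σ : Fin n → Bool, Real.exp (β ^ 2 * (mag σ) ^ 2 / (2 * n)))
        ≤ 1 / Real.sqrt (1 - β ^ 2) ∧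
    Real.log ((2 : ℝ) ^ (-(n : ℤ)) *
        ∑ σ : Fin n → Bool, Real.exp (β ^ 2 * (mag σ) ^ 2 / (2 * n)))
      ≤ -(1 / 2) * Real.log (1 - β ^ 2) := by
  have hβ : 0 < 1 - β ^ 2 := by nlinarith
  have h : (2 : ℝ) ^ (-(n : ℤ)) *
      (∑ σ : Fin n → Bool, Real.exp (β ^ 2 * (mag σ) ^ 2 / (2 * n))) ≤ 1 / √(1 - β ^ 2) := by
    rw [zpow_neg, zpow_natCast, inv_mul_le_iff₀ (by positivity)]
    exact sum_exp_sq_mag_le n hn β hβ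
  refine ⟨h, ?_⟩
  have hpos : 0 < (2 : ℝ) ^ (-(n : ℤ)) *
      (∑ σ : Fin n → Bool, Real.exp (β ^ 2 * (mag σ) ^ 2 / (2 * n))) :=
    mul_pos (by positivity) (Finset.sum_pos (fun σ _ => Real.exp_pos _) Finset.univ_nonempty)
  refine (Real.log_le_log hpos h).trans_eq ?_
  rw [one_div, Real.log_inv, Real.log_sqrt hβ.le]
  ring
end

section
/- The function β ↦ log Z_CW(β) is monotone nondecreasing on [0,∞) and satisfies log Z_CW(0) = 0. -/
theorem mag_flip {n : ℕ} (σ : Fin n → Bool) : mag (fun i => !σ i) = -mag σ := by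
  unfold mag
  rw [← Finset.sum_neg_distrib]
  refine Finset.sum_congr rfl fun i _ => ?_
  cases h : σ i <;> simp [spin, h]

theorem sum_mag_pow_nonneg (n j : ℕ) : 0 ≤ ∑ σ : Fin n → Bool, mag σ ^ j := by
  rcases Nat.even_or_odd j with hj | hj
  · exact Finset.sum_nonneg fun σ _ => hj.pow_nonneg _
  · have hflip : ∑ σ : Fin n → Bool, mag (fun i => !σ i) ^ j = ∑ σ : Fin n → Bool, mag σ ^ j :=
      Function.Bijective.sum_comp
        (Function.Involutive.bijective (f := fun (σ : Fin n → Bool) i => !σ i)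
          fun σ => by simp) (fun σ => mag σ ^ j)
    simp only [mag_flip, hj.neg_pow, Finset.sum_neg_distrib] at hflip
    linarith

/-- The moments of `n * mix` weighted by powers of the magnetization are nonnegative.
The extra factor `mag σ ^ j` is what makes the induction on `k` go through: expanding one factor of
`n * mix` only shifts `j`. -/
theorem sum_energy_pow_mul_mag_pow_nonneg (pmax n : ℕ) (γ : ℕ → ℝ) (k : ℕ) :
    ∀ j : ℕ, 0 ≤ ∑ σ : Fin n → Bool,
      ((n : ℝ) * mix pmax γ (mag σ / n)) ^ k * mag σ ^ j := by
  induction k with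
  | zero => simpa using sum_mag_pow_nonneg n
  | succ k ih =>
    intro j
    have key : ∑ σ : Fin n → Bool, ((n : ℝ) * mix pmax γ (mag σ / n)) ^ (k + 1) * mag σ ^ j
        = ∑ p ∈ Finset.Icc 2 pmax, ((n : ℝ) * γ p ^ 2 / (n : ℝ) ^ p) *
          ∑ σ : Fin n → Bool, ((n : ℝ) * mix pmax γ (mag σ / n)) ^ k * mag σ ^ (p + j) := by
      simp_rw [Finset.mul_sum]
      rw [Finset.sum_comm]
      refine Finset.sum_congr rfl fun σ _ => ?_
      have hmix : (n : ℝ) * mix pmax γ (mag σ / n)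
          = ∑ p ∈ Finset.Icc 2 pmax, (n : ℝ) * γ p ^ 2 / (n : ℝ) ^ p * mag σ ^ p := by
        rw [mix, Finset.mul_sum]
        refine Finset.sum_congr rfl fun p _ => ?_
        rw [div_pow]
        ring
      rw [pow_succ]
      nth_rewrite 2 [hmix]
      rw [Finset.mul_sum, Finset.sum_mul]
      refine Finset.sum_congr rfl fun p _ => ?_
      rw [pow_add]
      ring
    rw [key]
    exact Finset.sum_nonneg fun p _ => mul_nonneg (by positivity) (ih _)

/-- Nonnegativity of all moments makes the moment generating function monotone on `[0, ∞)`. -/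
theorem sum_exp_mul_le_of_moments_nonneg {ι : Type*} [Fintype ι] (H : ι → ℝ)
    (hH : ∀ k : ℕ, 0 ≤ ∑ i, H i ^ k) {a b : ℝ} (ha : 0 ≤ a) (hab : a ≤ b) :
    ∑ i, Real.exp (a * H i) ≤ ∑ i, Real.exp (b * H i) := by
  have hser : ∀ t : ℝ,
      HasSum (fun k : ℕ => t ^ k / (k.factorial : ℝ) * ∑ i, H i ^ k)
        (∑ i, Real.exp (t * H i)) := by
    intro t
    have h := hasSum_sum (s := Finset.univ) fun i (_ : i ∈ Finset.univ) =>
      NormedSpace.expSeries_div_hasSum_exp (t * H i)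
    simp only [← Real.exp_eq_exp_ℝ] at h
    have hterm : (fun k : ℕ => t ^ k / (k.factorial : ℝ) * ∑ i, H i ^ k)
        = fun k : ℕ => ∑ i, (t * H i) ^ k / (k.factorial : ℝ) := by
      funext k
      rw [Finset.mul_sum]
      refine Finset.sum_congr rfl fun i _ => ?_
      rw [mul_pow]
      ring
    rw [hterm]
    exact h
  refine hasSum_le (fun k => ?_) (hser a) (hser b)
  exact mul_le_mul_of_nonneg_right (by gcongr) (hH k)

theorem Zcw_pos (pmax n : ℕ) (γ : ℕ → ℝ) (β : ℝ) : 0 < Zcw pmax n γ β :=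
  mul_pos (by positivity)
    (Finset.sum_pos (fun _ _ => Real.exp_pos _) Finset.univ_nonempty)

/-- The function `β ↦ log Z_CW(β)` is monotone nondecreasing on `[0,∞)`
and `log Z_CW(0) = 0`. -/
theorem log_Zcw_monotone (pmax n : ℕ) (hpmax : 2 ≤ pmax) (hn : 1 ≤ n)
    (γ : ℕ → ℝ) (hγ : ∀ p, 0 ≤ γ p) :
    MonotoneOn (fun β => Real.log (Zcw pmax n γ β)) (Set.Ici (0 : ℝ)) ∧
      Real.log (Zcw pmax n γ 0) = 0 := by
  refine ⟨fun a ha b _ hab => Real.log_le_log (Zcw_pos _ _ _ _) ?_, ?_⟩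
  · unfold Zcw
    simp only [mul_assoc]
    refine mul_le_mul_of_nonneg_left ?_ (by positivity)
    refine sum_exp_mul_le_of_moments_nonneg
      (fun σ : Fin n → Bool => (n : ℝ) * mix pmax γ (mag σ / n)) (fun k => ?_) ha hab
    simpa using sum_energy_pow_mul_mag_pow_nonneg pmax n γ k 0
  · simp [Zcw]
end

section
/- Fix the mixture function ξ and a real β with 0 ≤ β < β_2nd. Then limsup_{n→∞} log Z_CW^{(n)}(β²) ≤ (1/2)·log(1/(1 − 2β²γ_2²)); i.e., log Z_CW^{(n)}(β²) ≤ (1/2)·log(1/(1 − 2β²γ_2²)) + o_n(1). -/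
/-! Write `E` for the average over uniform spins, `S` for the magnetization, `m = S / n` and
`a = β² γ₂² < 1/2`.

Near `m = 0` one has `β² ξ(m) ≤ b m²` for any `b > a`. The Hubbard–Stratonovich identity
`exp (t² / 2) = E_g exp (t g)`, with `g` standard Gaussian, together with `cosh u ≤ exp (u² / 2)`
gives `E exp (b S² / n) ≤ E_g exp (b g²) = (1 - 2b)^(-1/2)` for every `n` (`quad_bound`).

Away from `m = 0`, compactness and the second moment condition give `β² ξ(m) ≤ -h(m) - δ` for
some `δ > 0`. Moreover `E exp (-n h(m)) ≤ n + 1` (`entropy_bound`): when `σ` has `j` spins equal to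
`+1`, its weight `2^(-n) exp (-n h(m))` is the probability of `σ` under i.i.d. spins that are `+1`
with probability `j / n`, and each of these `n + 1` laws has total mass one.

Hence `Z ≤ (1 - 2b)^(-1/2) + (n + 1) exp (-n δ)`; let `n → ∞` and then `b ↓ a`. -/

open Filter

/-- The entropy function
`h(m) = -(1/2)((1-m)log(1-m) + (1+m)log(1+m))` (with `0·log 0 = 0`). -/
noncomputable def entH (m : ℝ) : ℝ :=
  -(1 / 2) * ((1 - m) * Real.log (1 - m) + (1 + m) * Real.log (1 + m))

/-- The second moment threshold
`β_2nd = sup{β ≥ 0 : 2β²γ₂² < 1 and β²ξ(m) + h(m) < 0 for all m ∈ [−1,1]∖{0}}`. -/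
noncomputable def beta2nd (pmax : ℕ) (γ : ℕ → ℝ) : ℝ :=
  sSup {β : ℝ | 0 ≤ β ∧ 2 * β ^ 2 * γ 2 ^ 2 < 1 ∧
    ∀ m ∈ Set.Icc (-1 : ℝ) 1, m ≠ 0 → β ^ 2 * mix pmax γ m + entH m < 0}

/-! ### Gaussian linearization of the quadratic model -/

theorem sum_exp_mag (n : ℕ) (u : ℝ) :
    ∑ σ : Fin n → Bool, Real.exp (u * mag σ) = (2 * Real.cosh u) ^ n := by
  have h : ∀ σ : Fin n → Bool, Real.exp (u * mag σ) = ∏ i, Real.exp (u * spin (σ i)) := by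
    intro σ
    rw [mag, Finset.mul_sum, Real.exp_sum]
  simp_rw [h]
  have := Finset.prod_univ_sum (fun _ : Fin n => (Finset.univ : Finset Bool))
    (fun _ b => Real.exp (u * spin b))
  rw [Fintype.piFinset_univ] at this
  rw [← this]
  simp [spin, Real.cosh_eq]
  congr 1
  ring

theorem gaussian_shift (t : ℝ) :
    MeasureTheory.Integrable (fun x : ℝ => Real.exp (-(1 / 2) * x ^ 2 + t * x)) ∧
    ∫ x : ℝ, Real.exp (-(1 / 2) * x ^ 2 + t * x)
      = Real.exp (t ^ 2 / 2) * √(2 * Real.pi) := by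
  have h : (fun x : ℝ => Real.exp (-(1 / 2) * x ^ 2 + t * x))
      = fun x => Real.exp (t ^ 2 / 2) * Real.exp (-(1 / 2) * (x - t) ^ 2) := by
    funext x
    rw [← Real.exp_add]
    congr 1
    ring
  rw [h]
  constructor
  · exact ((integrable_exp_neg_mul_sq (b := 1 / 2) (by norm_num)).comp_sub_right t).const_mul _
  · rw [MeasureTheory.integral_const_mul,
      MeasureTheory.integral_sub_right_eq_self (fun x : ℝ => Real.exp (-(1 / 2) * x ^ 2)) t,
      integral_gaussian]
    congr 2
    ring

/-- The quadratic Curie–Weiss partition function is at most its Gaussian counterpart,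
at every `n` and not only asymptotically. -/
theorem quad_bound (n : ℕ) (hn : 0 < n) (b : ℝ) (hb0 : 0 ≤ b) (hb : 2 * b < 1) :
    (2 : ℝ) ^ (-(n : ℤ)) * ∑ σ : Fin n → Bool, Real.exp (b * n * (mag σ / n) ^ 2)
      ≤ √(1 / (1 - 2 * b)) := by
  have hn' : (0 : ℝ) < n := by exact_mod_cast hn
  set r := √(2 * b / n) with hr
  have hr2 : r ^ 2 = 2 * b / n := Real.sq_sqrt (by positivity)
  have hpi : 0 < √(2 * Real.pi) := Real.sqrt_pos.2 (by positivity)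
  have h1 : (∑ σ : Fin n → Bool, Real.exp (b * n * (mag σ / n) ^ 2)) * √(2 * Real.pi)
      = ∫ x : ℝ, Real.exp (-(1 / 2) * x ^ 2) * (2 * Real.cosh (r * x)) ^ n := by
    have : (fun x : ℝ => Real.exp (-(1 / 2) * x ^ 2) * (2 * Real.cosh (r * x)) ^ n)
        = fun x => ∑ σ : Fin n → Bool, Real.exp (-(1 / 2) * x ^ 2 + (r * mag σ) * x) := by
      funext x
      rw [← sum_exp_mag, Finset.mul_sum]
      refine Finset.sum_congr rfl fun σ _ => ?_
      rw [← Real.exp_add]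
      congr 1
      ring
    rw [this, MeasureTheory.integral_finsetSum _ fun σ _ => (gaussian_shift _).1, Finset.sum_mul]
    refine Finset.sum_congr rfl fun σ _ => ?_
    rw [(gaussian_shift _).2]
    congr 2
    rw [mul_pow, hr2]
    field_simp
  have h2 : ∫ x : ℝ, Real.exp (-(1 / 2) * x ^ 2) * (2 * Real.cosh (r * x)) ^ n
      ≤ ∫ x : ℝ, 2 ^ n * Real.exp (-(1 / 2 - b) * x ^ 2) := by
    refine MeasureTheory.integral_mono_of_nonneg (.of_forall fun x => ?_)
      ((integrable_exp_neg_mul_sq (by linarith)).const_mul _) (.of_forall fun x => ?_)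
    · have := Real.cosh_pos (r * x)
      show (0 : ℝ) ≤ _
      positivity
    · show Real.exp (-(1 / 2) * x ^ 2) * (2 * Real.cosh (r * x)) ^ n
        ≤ 2 ^ n * Real.exp (-(1 / 2 - b) * x ^ 2)
      have hc : Real.cosh (r * x) ^ n ≤ Real.exp (b * x ^ 2) := by
        refine (pow_le_pow_left₀ (Real.cosh_pos _).le (Real.cosh_le_exp_half_sq _) n).trans
          (le_of_eq ?_)
        rw [← Real.exp_nat_mul, mul_pow, hr2]
        congr 1
        field_simp
      calc _ = 2 ^ n * (Real.exp (-(1 / 2) * x ^ 2) * Real.cosh (r * x) ^ n) := by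
            rw [mul_pow]; ring
        _ ≤ 2 ^ n * (Real.exp (-(1 / 2) * x ^ 2) * Real.exp (b * x ^ 2)) := by gcongr
        _ = _ := by
            rw [← Real.exp_add]
            congr 2
            ring
  rw [MeasureTheory.integral_const_mul, integral_gaussian, ← h1] at h2
  have h3 : √(Real.pi / (1 / 2 - b)) = √(1 / (1 - 2 * b)) * √(2 * Real.pi) := by
    rw [← Real.sqrt_mul (by have : 0 < 1 - 2 * b := by linarith
                            positivity)]
    congr 1
    have h4 : 1 / 2 - b ≠ 0 := by linarith
    have h5 : 1 - 2 * b ≠ 0 := by linarith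
    field_simp
  rw [h3, ← mul_assoc] at h2
  have h6 := le_of_mul_le_mul_right h2 hpi
  rw [zpow_neg, zpow_natCast, inv_mul_le_iff₀ (by positivity)]
  exact h6

/-! ### Entropy bound on the law of the magnetization -/

/-- The number of `+1` spins of a configuration. -/
def plusCount {n : ℕ} (σ : Fin n → Bool) : ℕ := (Finset.univ.filter fun i => σ i = true).card

theorem plusCount_le {n : ℕ} (σ : Fin n → Bool) : plusCount σ ≤ n := by
  simpa [plusCount] using Finset.card_le_univ (Finset.univ.filter fun i => σ i = true)

theorem minusCount {n : ℕ} (σ : Fin n → Bool) :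
    (Finset.univ.filter fun i => ¬ σ i = true).card = n - plusCount σ := by
  have := Finset.card_filter_add_card_filter_not (s := (Finset.univ : Finset (Fin n)))
    (fun i => σ i = true)
  rw [Finset.card_univ, Fintype.card_fin] at this
  unfold plusCount
  omega

theorem mag_eq {n : ℕ} (σ : Fin n → Bool) : mag σ = 2 * plusCount σ - n := by
  unfold mag spin
  rw [Finset.sum_ite, Finset.sum_const, Finset.sum_const, minusCount, nsmul_eq_mul, nsmul_eq_mul,
    Nat.cast_sub (plusCount_le σ)]
  unfold plusCount
  ring

theorem mag_div_mem {n : ℕ} (hn : 0 < n) (σ : Fin n → Bool) :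
    mag σ / n ∈ Set.Icc (-1 : ℝ) 1 := by
  have hn' : (0 : ℝ) < n := by exact_mod_cast hn
  have h1 : (plusCount σ : ℝ) ≤ n := by exact_mod_cast plusCount_le σ
  have h2 : (0 : ℝ) ≤ plusCount σ := by positivity
  rw [mag_eq]
  constructor
  · rw [le_div_iff₀ hn']; linarith
  · rw [div_le_iff₀ hn']; linarith

/-- The factor `2 y` absorbs the normalization `2^(-n)` into the entropy weight; at `j = 0` the
conventions `log 0 = 0` and `0 ^ 0 = 1` agree. -/
theorem exp_mul_log (j : ℕ) (y : ℝ) (hy : 0 ≤ y) (hj : y = 0 → j = 0) :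
    Real.exp (j * Real.log (2 * y)) = 2 ^ j * y ^ j := by
  rcases hy.eq_or_lt with h | h
  · simp [hj h.symm]
  · rw [Real.exp_nat_mul, Real.exp_log (by positivity), mul_pow]

/-- The normalized entropy weight of `σ` is its probability under i.i.d. spins whose mean is the
empirical mean `mag σ / n` of `σ` itself. -/
theorem entropy_weight {n : ℕ} (hn : 0 < n) (σ : Fin n → Bool) :
    (2 : ℝ) ^ (-(n : ℤ)) * Real.exp (-(n * entH (mag σ / n)))
      = ∏ i, (if σ i = true then (plusCount σ / n : ℝ) else 1 - plusCount σ / n) := by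
  have hn' : (0 : ℝ) < n := by exact_mod_cast hn
  have hle := plusCount_le σ
  have hle' : (plusCount σ : ℝ) ≤ n := by exact_mod_cast hle
  rw [Finset.prod_ite, Finset.prod_const, Finset.prod_const, minusCount]
  change _ = (plusCount σ / n : ℝ) ^ (plusCount σ) * _
  set j := plusCount σ with hj
  have hcast : ((n - j : ℕ) : ℝ) = n - j := Nat.cast_sub hle
  have e : -(n * entH (mag σ / n))
      = j * Real.log (2 * (j / n)) + ((n - j : ℕ) : ℝ) * Real.log (2 * (1 - j / n)) := by
    rw [entH, mag_eq, ← hj, hcast]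
    have h1 : 1 - (2 * (j : ℝ) - n) / n = 2 * (1 - j / n) := by field_simp; ring
    have h2 : 1 + (2 * (j : ℝ) - n) / n = 2 * (j / n) := by field_simp; ring
    rw [h1, h2]
    field_simp
    ring
  rw [e, Real.exp_add, exp_mul_log _ _ (by positivity), exp_mul_log]
  · rw [zpow_neg, zpow_natCast]
    have : (2 : ℝ) ^ n = 2 ^ j * 2 ^ (n - j) := by rw [← pow_add]; congr 1; omega
    rw [this]
    field_simp
  · rw [sub_nonneg, div_le_one hn']; exact hle'
  · intro h
    have : (j : ℝ) = n := by field_simp at h; linarith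
    have : j = n := by exact_mod_cast this
    omega
  · intro h
    have : (j : ℝ) = 0 := by field_simp at h; linarith
    exact_mod_cast this

theorem entropy_bound {n : ℕ} (hn : 0 < n) :
    (2 : ℝ) ^ (-(n : ℤ)) * ∑ σ : Fin n → Bool, Real.exp (-(n * entH (mag σ / n))) ≤ n + 1 := by
  have hn' : (0 : ℝ) < n := by exact_mod_cast hn
  have hmass : ∀ x : ℝ, ∑ σ : Fin n → Bool, ∏ i, (if σ i = true then x else 1 - x) = 1 := by
    intro x
    have := Finset.prod_univ_sum (fun _ : Fin n => (Finset.univ : Finset Bool))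
      (fun _ b => if b = true then x else 1 - x)
    rw [Fintype.piFinset_univ] at this
    rw [← this]
    simp
  rw [Finset.mul_sum]
  calc _ ≤ ∑ σ : Fin n → Bool, ∑ j ∈ Finset.range (n + 1),
        ∏ i, (if σ i = true then (j / n : ℝ) else 1 - j / n) := by
        refine Finset.sum_le_sum fun σ _ => ?_
        rw [entropy_weight hn]
        refine Finset.single_le_sum
          (f := fun j : ℕ => ∏ i, (if σ i = true then (j / n : ℝ) else 1 - j / n)) ?_
          (Finset.mem_range.2 (Nat.lt_succ_of_le (plusCount_le σ)))
        intro j hj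
        have hj' : (j : ℝ) ≤ n := by
          exact_mod_cast Nat.le_of_lt_succ (Finset.mem_range.1 hj)
        have : (j : ℝ) / n ≤ 1 := (div_le_one hn').2 hj'
        refine Finset.prod_nonneg fun i _ => ?_
        split_ifs
        · positivity
        · linarith
    _ = n + 1 := by
        rw [Finset.sum_comm]
        simp [hmass]

/-! ### Consequences of the second moment condition -/

theorem continuous_mix (pmax : ℕ) (γ : ℕ → ℝ) : Continuous (mix pmax γ) := by
  unfold mix
  fun_prop

theorem continuous_entH : Continuous entH := by
  have h1 : Continuous fun m : ℝ => (1 - m) * Real.log (1 - m) :=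
    Real.continuous_mul_log.comp (by fun_prop : Continuous fun m : ℝ => 1 - m)
  have h2 : Continuous fun m : ℝ => (1 + m) * Real.log (1 + m) :=
    Real.continuous_mul_log.comp (by fun_prop : Continuous fun m : ℝ => 1 + m)
  unfold entH
  exact continuous_const.mul (h1.add h2)

theorem mix_le_abs (pmax : ℕ) (γ : ℕ → ℝ) (m : ℝ) : mix pmax γ m ≤ mix pmax γ |m| := by
  unfold mix
  refine Finset.sum_le_sum fun p _ => mul_le_mul_of_nonneg_left ?_ (sq_nonneg _)
  rw [← abs_pow]
  exact le_abs_self _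

theorem entH_abs (m : ℝ) : entH |m| = entH m := by
  rcases abs_cases m with ⟨h, _⟩ | ⟨h, _⟩
  · rw [h]
  · rw [h]
    unfold entH
    rw [sub_neg_eq_add, ← sub_eq_add_neg]
    ring

/-- The conditions defining `beta2nd` are inherited by smaller `β`. Passing from `m` to `|m|` covers
`ξ(m) < 0`, where `β² ξ(m)` is decreasing in `β`. -/
theorem subcritical (pmax : ℕ) (γ : ℕ → ℝ) (β : ℝ) (hβ0 : 0 ≤ β) (hβ : β < beta2nd pmax γ) :
    2 * β ^ 2 * γ 2 ^ 2 < 1 ∧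
      ∀ m ∈ Set.Icc (-1 : ℝ) 1, m ≠ 0 → β ^ 2 * mix pmax γ m + entH m < 0 := by
  unfold beta2nd at hβ
  have hne : {β : ℝ | 0 ≤ β ∧ 2 * β ^ 2 * γ 2 ^ 2 < 1 ∧
    ∀ m ∈ Set.Icc (-1 : ℝ) 1, m ≠ 0 → β ^ 2 * mix pmax γ m + entH m < 0}.Nonempty := by
    by_contra h
    rw [Set.not_nonempty_iff_eq_empty] at h
    rw [h, Real.sSup_empty] at hβ
    linarith
  obtain ⟨β', ⟨-, h2, h3⟩, hlt⟩ := exists_lt_of_lt_csSup hne hβ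
  have hsq : β ^ 2 ≤ β' ^ 2 := pow_le_pow_left₀ hβ0 hlt.le 2
  constructor
  · have := mul_le_mul_of_nonneg_right hsq (sq_nonneg (γ 2))
    linarith
  · intro m hm hm0
    have h0 : 0 ≤ mix pmax γ |m| := Finset.sum_nonneg fun p _ => by positivity
    have h4 := h3 |m| ⟨by linarith [abs_nonneg m], abs_le.2 hm⟩ (abs_ne_zero.2 hm0)
    rw [entH_abs] at h4
    have h5 := mul_le_mul_of_nonneg_left (mix_le_abs pmax γ m) (sq_nonneg β)
    have h6 := mul_le_mul_of_nonneg_right hsq h0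
    linarith

theorem mix_near_zero (pmax : ℕ) (hpmax : 2 ≤ pmax) (γ : ℕ → ℝ) (β b : ℝ)
    (hb : β ^ 2 * γ 2 ^ 2 < b) :
    ∃ ε > 0, ∀ m : ℝ, |m| < ε → β ^ 2 * mix pmax γ m ≤ b * m ^ 2 := by
  set g : ℝ → ℝ := fun m => β ^ 2 * ∑ p ∈ Finset.Icc 2 pmax, γ p ^ 2 * m ^ (p - 2) with hg
  have hgc : Continuous g := by
    rw [hg]
    fun_prop
  have hg0 : g 0 = β ^ 2 * γ 2 ^ 2 := by
    simp only [hg]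
    congr 1
    rw [Finset.sum_eq_single 2]
    · simp
    · intro p hp hp2
      have := (Finset.mem_Icc.1 hp).1
      rw [zero_pow (by omega), mul_zero]
    · intro h
      exact absurd (Finset.mem_Icc.2 ⟨le_rfl, hpmax⟩) h
  have hev : ∀ᶠ m in nhds (0 : ℝ), g m < b :=
    hgc.continuousAt.eventually_lt continuousAt_const (by rw [hg0]; exact hb)
  obtain ⟨ε, hε, h⟩ := Metric.eventually_nhds_iff.1 hev
  refine ⟨ε, hε, fun m hm => ?_⟩
  have hlt := h (y := m) (by simpa [Real.dist_eq] using hm)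
  have hfac : β ^ 2 * mix pmax γ m = g m * m ^ 2 := by
    simp only [hg, mix]
    rw [mul_assoc, Finset.sum_mul]
    congr 1
    refine Finset.sum_congr rfl fun p hp => ?_
    rw [mul_assoc, ← pow_add, Nat.sub_add_cancel (Finset.mem_Icc.1 hp).1]
  rw [hfac]
  exact mul_le_mul_of_nonneg_right hlt.le (sq_nonneg m)

/-! ### Bound on the partition function -/

theorem Zcw_le (pmax : ℕ) (hpmax : 2 ≤ pmax) (γ : ℕ → ℝ) (β b : ℝ) (hβ0 : 0 ≤ β)
    (hβ : β < beta2nd pmax γ) (hab : β ^ 2 * γ 2 ^ 2 < b) (hb : 2 * b < 1) :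
    ∃ δ > 0, ∀ n : ℕ, 0 < n →
      Zcw pmax n γ (β ^ 2) ≤ √(1 / (1 - 2 * b)) + (n + 1) * Real.exp (-(n * δ)) := by
  obtain ⟨-, hneg⟩ := subcritical pmax γ β hβ0 hβ
  obtain ⟨ε, hε, hnear⟩ := mix_near_zero pmax hpmax γ β b hab
  have hb0 : 0 ≤ b := le_trans (by positivity) hab.le
  have hK : IsCompact (Set.Icc (-1 : ℝ) 1 ∩ {m | ε ≤ |m|}) :=
    isCompact_Icc.inter_right (isClosed_le continuous_const continuous_abs)
  have hcont : Continuous fun m => -(β ^ 2 * mix pmax γ m + entH m) :=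
    ((continuous_const.mul (continuous_mix pmax γ)).add continuous_entH).neg
  obtain ⟨δ, hδ, hfar⟩ := hK.exists_forall_le' hcont.continuousOn (a := 0) (by
    rintro m ⟨hm, hm'⟩
    have hm0 : m ≠ 0 := abs_pos.1 (hε.trans_le hm')
    linarith [hneg m hm hm0])
  refine ⟨δ, hδ, fun n hn => ?_⟩
  have hterm : ∀ σ : Fin n → Bool, Real.exp (β ^ 2 * n * mix pmax γ (mag σ / n))
      ≤ Real.exp (b * n * (mag σ / n) ^ 2)
        + Real.exp (-(n * entH (mag σ / n))) * Real.exp (-(n * δ)) := by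
    intro σ
    have hn' : (0 : ℝ) ≤ n := by positivity
    rcases lt_or_ge |mag σ / n| ε with h | h
    · refine le_add_of_le_of_nonneg (Real.exp_le_exp.2 ?_) (by positivity)
      have := mul_le_mul_of_nonneg_left (hnear _ h) hn'
      linarith
    · refine le_add_of_nonneg_of_le (by positivity) ?_
      rw [← Real.exp_add]
      refine Real.exp_le_exp.2 ?_
      have := mul_le_mul_of_nonneg_left (hfar _ ⟨mag_div_mem hn σ, h⟩) hn'
      linarith
  calc Zcw pmax n γ (β ^ 2)
      ≤ (2 : ℝ) ^ (-(n : ℤ)) * ∑ σ : Fin n → Bool, (Real.exp (b * n * (mag σ / n) ^ 2)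
        + Real.exp (-(n * entH (mag σ / n))) * Real.exp (-(n * δ))) := by
        unfold Zcw
        exact mul_le_mul_of_nonneg_left (Finset.sum_le_sum fun σ _ => hterm σ) (by positivity)
    _ = (2 : ℝ) ^ (-(n : ℤ)) * ∑ σ : Fin n → Bool, Real.exp (b * n * (mag σ / n) ^ 2)
        + ((2 : ℝ) ^ (-(n : ℤ)) * ∑ σ : Fin n → Bool, Real.exp (-(n * entH (mag σ / n))))
          * Real.exp (-(n * δ)) := by
        rw [Finset.sum_add_distrib, ← Finset.sum_mul]
        ring
    _ ≤ _ := add_le_add (quad_bound n hn b hb0 hb)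
        (mul_le_mul_of_nonneg_right (entropy_bound hn) (Real.exp_pos _).le)

theorem tendsto_remainder (δ : ℝ) (hδ : 0 < δ) :
    Tendsto (fun n : ℕ => ((n : ℝ) + 1) * Real.exp (-(n * δ))) atTop (nhds 0) := by
  have hr : Real.exp (-δ) < 1 := by rw [Real.exp_lt_one_iff]; linarith
  have h1 := tendsto_self_mul_const_pow_of_lt_one (Real.exp_pos (-δ)).le hr
  have h2 := tendsto_pow_atTop_nhds_zero_of_lt_one (Real.exp_pos (-δ)).le hr
  have h3 := h1.add h2
  rw [add_zero] at h3
  refine h3.congr fun n => ?_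
  rw [← Real.exp_nat_mul, mul_neg]
  ring

/-- For `0 ≤ β < β_2nd`,
`log Z_CW^{(n)}(β²) ≤ (1/2)·log(1/(1 − 2β²γ₂²)) + o_n(1)`. -/
theorem mixed_curie_weiss_bound (pmax : ℕ) (hpmax : 2 ≤ pmax)
    (γ : ℕ → ℝ) (hγ : ∀ p, 0 ≤ γ p) (hne : ∃ p ∈ Finset.Icc 2 pmax, γ p ≠ 0)
    (β : ℝ) (hβ0 : 0 ≤ β) (hβ : β < beta2nd pmax γ) :
    ∀ c > 0, ∀ᶠ n : ℕ in atTop,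
      Real.log (Zcw pmax n γ (β ^ 2)) ≤
        (1 / 2) * Real.log (1 / (1 - 2 * β ^ 2 * γ 2 ^ 2)) + c := by
  intro c hc
  obtain ⟨ha, -⟩ := subcritical pmax γ β hβ0 hβ
  set a := β ^ 2 * γ 2 ^ 2 with ha_def
  have ha' : 2 * β ^ 2 * γ 2 ^ 2 = 2 * a := by rw [ha_def]; ring
  rw [ha'] at ha ⊢
  have hcont : ContinuousAt (fun b : ℝ => (1 / 2) * Real.log (1 / (1 - 2 * b))) a := by
    have h1 : 1 - 2 * a ≠ 0 := by linarith
    have h2 : 1 / (1 - 2 * a) ≠ 0 := one_div_ne_zero h1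
    have h3 : ContinuousAt (fun b : ℝ => 1 - 2 * b) a := by fun_prop
    have h4 : ContinuousAt (fun b : ℝ => 1 / (1 - 2 * b)) a := continuousAt_const.div h3 h1
    exact continuousAt_const.mul (h4.log h2)
  have hev : ∀ᶠ b in nhds a, (1 / 2) * Real.log (1 / (1 - 2 * b))
      < (1 / 2) * Real.log (1 / (1 - 2 * a)) + c :=
    hcont.eventually_lt continuousAt_const (by linarith)
  have hev2 : ∀ᶠ b in nhds a, 2 * b < 1 :=
    (by fun_prop : ContinuousAt (fun b : ℝ => 2 * b) a).eventually_lt continuousAt_const ha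
  obtain ⟨b, ⟨hb1, hb2⟩, hab⟩ :=
    (((hev.and hev2).filter_mono nhdsWithin_le_nhds).and
      (self_mem_nhdsWithin : Set.Ioi a ∈ nhdsWithin a (Set.Ioi a))).exists
  obtain ⟨δ, hδ, hZ⟩ := Zcw_le pmax hpmax γ β b hβ0 hβ hab hb2
  have hpos : 0 < 1 / (1 - 2 * b) := one_div_pos.2 (by linarith)
  have hlim : Tendsto
      (fun n : ℕ => Real.log (√(1 / (1 - 2 * b)) + (n + 1) * Real.exp (-(n * δ)))) atTop
      (nhds (Real.log √(1 / (1 - 2 * b)))) := by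
    have h := (tendsto_remainder δ hδ).const_add (√(1 / (1 - 2 * b)))
    rw [add_zero] at h
    exact h.log (Real.sqrt_pos.2 hpos).ne'
  rw [Real.log_sqrt hpos.le, div_eq_inv_mul _ (2 : ℝ), ← one_div (2 : ℝ)] at hlim
  filter_upwards [hlim.eventually_lt_const hb1, eventually_gt_atTop 0] with n hn hn0
  refine (Real.log_le_log ?_ (hZ n hn0)).trans hn.le
  unfold Zcw
  exact mul_pos (by positivity)
    (Finset.sum_pos (fun σ _ => Real.exp_pos _) Finset.univ_nonempty)
end
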